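/- arXiv:2508.04769 — 8 statements merged into one kernel-verified Lean document; each statement's English description precedes it below -/
import Mathlib

section
/- Let g ⊆ Q be a finite set such that |f_j ∩ g| is even for every j ∈ C_X, and let e ⊆ Q satisfy 2·|e ∩ g| = |g|. If a family τ satisfies the simplified dual inequalities for e, then the first inequality is saturated on g: for every i ∈ g, Σ_{j : i ∈ f_j} τ_{ij} = γ_i, where γ_i = −1 if i ∈ e and γ_i = 1 otherwise. -/
open Finset

/-- The simplified dual inequalities for an error `e`. -/
def SimpDual {Q C_X : Type*} [Fintype C_X] [DecidableEq Q]
    (f : C_X → Finset Q) (e : Finset Q) (τ : C_X → Q → ℝ) : Prop :=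
  (∀ i, ∑ j ∈ Finset.univ.filter (fun j => i ∈ f j), τ j i ≤
      if i ∈ e then (-1 : ℝ) else 1) ∧
  (∀ j, ∀ i ∈ f j, ∀ i' ∈ f j, i ≠ i' → 0 ≤ τ j i + τ j i')

/-! Sum the first inequality over `g`. The left side regroups by checks, and on each even overlap
`f j ∩ g` it is a sum of pairs `τ j i + τ j i' ≥ 0`; the right side is `|g| - 2|e ∩ g| = 0`. An
inequality between sums that is an equality must be an equality in each term. -/

section

variable {Q C M : Type*}

theorem sum_nonneg_of_even_card_of_pairwise [AddCommMonoid M] [PartialOrder M]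
    [IsOrderedAddMonoid M] {s : Finset Q} {t : Q → M} (hs : Even #s)
    (ht : (s : Set Q).Pairwise fun i i' => 0 ≤ t i + t i') : 0 ≤ ∑ i ∈ s, t i := by
  classical
  induction s using Finset.strongInduction with
  | H s ih =>
    rcases s.eq_empty_or_nonempty with rfl | hne
    · exact sum_empty.ge
    have htwo : 2 ≤ #s := Nat.le_of_dvd hne.card_pos hs.two_dvd
    obtain ⟨a, ha, b, hb, hab⟩ := one_lt_card.mp htwo
    have hsub : {a, b} ⊆ s := by simp [insert_subset_iff, ha, hb]
    have heven : Even #(s \ {a, b}) := by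
      rw [card_sdiff_of_subset hsub, card_pair hab]
      exact hs.tsub even_two
    have hrest : 0 ≤ ∑ i ∈ s \ {a, b}, t i :=
      ih _ (sdiff_ssubset hsub (insert_nonempty a {b})) heven
        (ht.mono (coe_subset.mpr sdiff_subset))
    calc 0 ≤ ∑ i ∈ s \ {a, b}, t i + (t a + t b) := add_nonneg hrest (ht ha hb hab)
      _ = ∑ i ∈ s, t i := by rw [← sum_pair hab, sum_sdiff hsub]

theorem sum_ite_mem_neg_one_one {R : Type*} [DecidableEq Q] [Ring R] (e g : Finset Q) :
    ∑ i ∈ g, (if i ∈ e then (-1 : R) else 1) = #g - 2 * #(e ∩ g) := by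
  have hcard : (#(e ∩ g) : R) + #(g \ e) = #g := by
    rw [inter_comm, ← Nat.cast_add, card_inter_add_card_sdiff]
  simp only [sum_ite, filter_mem_eq_inter, filter_notMem_eq_sdiff, sum_const, nsmul_eq_mul,
    mul_neg, mul_one, inter_comm g e, ← hcard, two_mul]
  abel

theorem sum_ite_mem_neg_one_one_eq_zero {R : Type*} [DecidableEq Q] [Ring R] {e g : Finset Q}
    (he : 2 * #(e ∩ g) = #g) : ∑ i ∈ g, (if i ∈ e then (-1 : R) else 1) = 0 := by
  rw [sum_ite_mem_neg_one_one, ← he, Nat.cast_mul, Nat.cast_ofNat, sub_self]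

theorem sum_sum_filter_mem_eq_sum_sum_inter [DecidableEq Q] [AddCommMonoid M]
    (J : Finset C) (f : C → Finset Q) (g : Finset Q) (τ : C → Q → M) :
    ∑ i ∈ g, ∑ j ∈ J with i ∈ f j, τ j i = ∑ j ∈ J, ∑ i ∈ f j ∩ g, τ j i :=
  sum_comm' fun i j => by simp only [mem_filter, mem_inter]; tauto

theorem stmt6_general [DecidableEq Q] [AddCommMonoid M] [PartialOrder M]
    [IsOrderedCancelAddMonoid M] {J : Finset C} {f : C → Finset Q} {g : Finset Q}
    {γ : Q → M} {τ : C → Q → M} (hfg : ∀ j ∈ J, Even #(f j ∩ g)) (hγ : ∑ i ∈ g, γ i ≤ 0)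
    (hle : ∀ i ∈ g, ∑ j ∈ J with i ∈ f j, τ j i ≤ γ i)
    (hpair : ∀ j ∈ J, (↑(f j ∩ g) : Set Q).Pairwise fun i i' => 0 ≤ τ j i + τ j i') :
    ∀ i ∈ g, ∑ j ∈ J with i ∈ f j, τ j i = γ i := by
  have hnonneg : 0 ≤ ∑ i ∈ g, ∑ j ∈ J with i ∈ f j, τ j i := by
    rw [sum_sum_filter_mem_eq_sum_sum_inter]
    exact sum_nonneg fun j hj => sum_nonneg_of_even_card_of_pairwise (hfg j hj) (hpair j hj)
  exact (sum_eq_sum_iff_of_le hle).mp (le_antisymm (sum_le_sum hle) (hγ.trans hnonneg))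

end

/-- If every check overlaps the stabilizer `g` evenly and the error `e` covers
exactly half of `g`, then the first simplified dual inequality is saturated on `g`. -/
theorem stmt6 {Q C_X : Type*} [Fintype C_X] [DecidableEq Q]
    (f : C_X → Finset Q) (g : Finset Q) (e : Finset Q)
    (hfg : ∀ j, Even ((f j ∩ g).card))
    (he : 2 * (e ∩ g).card = g.card)
    (τ : C_X → Q → ℝ) (hτ : SimpDual f e τ) :
    ∀ i ∈ g, ∑ j ∈ Finset.univ.filter (fun j => i ∈ f j), τ j i =
      if i ∈ e then (-1 : ℝ) else 1 := by
  exact stmt6_general (fun j _ => hfg j) (sum_ite_mem_neg_one_one_eq_zero he).le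
    (fun i _ => hτ.1 i) fun j _ =>
      Set.Pairwise.mono (coe_subset.mpr inter_subset_left) (hτ.2 j)
end

section
/- Let g, g' ⊆ Q be finite sets such that |f_j ∩ g| and |f_j ∩ g'| are even for every j ∈ C_X, and suppose every j ∈ C_X with f_j ∩ (g ∩ g') ≠ ∅ satisfies f_j ∩ (g Δ g') ≠ ∅. Let e ⊆ g ∪ g' satisfy |e ∩ (g \ g')| = ⌊|g \ g'|/2⌋, |e ∩ (g' \ g)| = ⌈|g' \ g|/2⌉, and |e ∩ (g ∩ g')| = 1, with |g| and |g'| even, and define the syndrome s : C_X → ZMod 2 by s_j = |e ∩ f_j| mod 2. Define x : Q → ℝ by x_i = 1/2 for i ∈ g Δ g' and x_i = 0 otherwise. Then there exists a family w such that (x, w) is feasible for the syndrome-based LP with syndrome s, and its objective value satisfies Σ_{i ∈ Q} x_i = |g Δ g'|/2 = |e| − 1. In particular, the optimal value of this LP is strictly smaller than |e|. -/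
open Finset

/-- Feasibility for the syndrome-based LP. -/
def SynFeasible {Q C_X : Type*} [DecidableEq Q]
    (f : C_X → Finset Q) (s : C_X → ZMod 2) (x : Q → ℝ) (w : C_X → Finset Q → ℝ) : Prop :=
  (∀ j, ∑ S ∈ (f j).powerset.filter (fun S => (S.card : ZMod 2) = s j), w j S = 1) ∧
  (∀ j, ∀ i ∈ f j,
    ∑ S ∈ (f j).powerset.filter (fun S => (S.card : ZMod 2) = s j ∧ i ∈ S), w j S = x i) ∧
  (∀ i, 0 ≤ x i) ∧
  (∀ j, ∀ S ∈ (f j).powerset.filter (fun S => (S.card : ZMod 2) = s j), 0 ≤ w j S)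

/-!
A half-integral vector supported on `h` is feasible as soon as, at each check `j`, the set
`f j ∩ h` splits into two parts whose cardinalities both have parity `s j`: put weight `1/2` on each
part. When `|f j ∩ h|` is even, the two parts of any splitting have the same parity, so the only
obstruction is an odd syndrome at a check disjoint from `h`. For `h = g ∆ g'`, such a check misses
`g ∩ g'` as well, hence misses `e`, and its syndrome vanishes. The objective is `|e| - 1` because
`e` contains half of `g ∆ g'` and a single further element.
-/

section Parity

variable {α : Type*}

lemma exists_subset_card_eq_zmod_two {h : Finset α} {p : ZMod 2} (hp : h = ∅ → p = 0) :
    ∃ A ⊆ h, (A.card : ZMod 2) = p := by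
  have hcases : p = 0 ∨ p = 1 := by clear hp; decide +revert
  rcases hcases with rfl | rfl
  · exact ⟨∅, empty_subset h, by rw [card_empty, Nat.cast_zero]⟩
  · obtain ⟨a, ha⟩ : h.Nonempty := nonempty_iff_ne_empty.2 fun h0 => one_ne_zero (hp h0)
    exact ⟨{a}, singleton_subset_iff.2 ha, by rw [card_singleton, Nat.cast_one]⟩

variable [DecidableEq α]

lemma card_symmDiff (s t : Finset α) :
    (symmDiff s t).card = (s \ t).card + (t \ s).card :=
  card_union_of_disjoint disjoint_sdiff_sdiff

lemma even_card_symmDiff_iff {s t : Finset α} :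
    Even (symmDiff s t).card ↔ (Even s.card ↔ Even t.card) := by
  have hst : (s \ t).card + (s ∩ t).card = s.card := card_sdiff_add_card_inter s t
  have hts : (t \ s).card + (s ∩ t).card = t.card :=
    inter_comm s t ▸ card_sdiff_add_card_inter t s
  rw [card_symmDiff]
  grind

lemma natCast_card_sdiff_of_even {R : Type*} [Ring R] [CharP R 2] {A h : Finset α}
    (hA : A ⊆ h) (hh : Even h.card) : ((h \ A).card : R) = A.card := by
  have hh0 : (h.card : R) = 0 := (CharP.cast_eq_zero_iff R 2 _).2 hh.two_dvd
  rw [cast_card_sdiff hA, hh0, zero_sub, CharTwo.neg_eq]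

end Parity

section TwoSets

variable {α : Type*} [DecidableEq α] {e g g' : Finset α}

lemma inter_eq_empty_of_inter_symmDiff_eq_empty {t : Finset α} (he : e ⊆ g ∪ g')
    (ht : (t ∩ (g ∩ g')).Nonempty → (t ∩ symmDiff g g').Nonempty)
    (h : t ∩ symmDiff g g' = ∅) : e ∩ t = ∅ := by
  have hinter : t ∩ (g ∩ g') = ∅ :=
    not_nonempty_iff_eq_empty.1 fun hne => (ht hne).ne_empty h
  have hunion : t ∩ (g ∪ g') = ∅ := by
    rw [← sup_eq_union, ← symmDiff_sup_inf, sup_eq_union, inf_eq_inter, inter_union_distrib_left,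
      h, hinter, empty_union]
  rw [inter_comm, ← subset_empty, ← hunion]
  exact inter_subset_inter_left he

lemma card_inter_sdiff_add_card_inter_sdiff_add_card_inter (he : e ⊆ g ∪ g') :
    (e ∩ (g \ g')).card + (e ∩ (g' \ g)).card + (e ∩ (g ∩ g')).card = e.card := by
  have hdisj : Disjoint (e ∩ symmDiff g g') (e ∩ (g ∩ g')) :=
    (disjoint_symmDiff_inf g g').mono inter_subset_right inter_subset_right
  have hcover : e ∩ symmDiff g g' ∪ e ∩ (g ∩ g') = e := by
    rw [← inter_union_distrib_left, ← sup_eq_union, ← inf_eq_inter (s := g), symmDiff_sup_inf]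
    exact inter_eq_left.2 he
  have hdiff : (e ∩ symmDiff g g').card = (e ∩ (g \ g')).card + (e ∩ (g' \ g)).card := by
    rw [← card_union_of_disjoint (disjoint_sdiff_sdiff.mono inter_subset_right inter_subset_right),
      ← inter_union_distrib_left]
    rfl
  rw [← hdiff, ← card_union_of_disjoint hdisj, hcover]

lemma two_mul_card_eq_card_symmDiff_add (he : e ⊆ g ∪ g') (heven : Even (symmDiff g g').card)
    (hfloor : (e ∩ (g \ g')).card = (g \ g').card / 2)
    (hceil : (e ∩ (g' \ g)).card = ((g' \ g).card + 1) / 2) :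
    2 * e.card = (symmDiff g g').card + 2 * (e ∩ (g ∩ g')).card := by
  have hsplit := card_inter_sdiff_add_card_inter_sdiff_add_card_inter he
  rw [card_symmDiff] at heven ⊢
  grind

end TwoSets

section LP

variable {Q C_X : Type*} [DecidableEq Q]

/-- The uniform distribution on the local configurations `A` and `B`, used as the weights `w j` of
a single check `j`. The two point masses are added, so the total weight is `1` even if `A = B`. -/
noncomputable def pairWeight (A B : Finset Q) : Finset Q → ℝ :=
  Pi.single A (1 / 2) + Pi.single B (1 / 2)

lemma pairWeight_nonneg (A B S : Finset Q) : 0 ≤ pairWeight A B S := by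
  have hhalf : (0 : Finset Q → ℝ) ≤ pairWeight A B :=
    add_nonneg (Pi.single_nonneg.2 (by norm_num)) (Pi.single_nonneg.2 (by norm_num))
  exact hhalf S

lemma sum_pairWeight (A B : Finset Q) (T : Finset (Finset Q)) :
    ∑ S ∈ T, pairWeight A B S = (if A ∈ T then 1 / 2 else 0) + if B ∈ T then 1 / 2 else 0 := by
  simp only [pairWeight, Pi.add_apply, sum_add_distrib, sum_pi_single']

lemma synFeasible_pairWeight {f : C_X → Finset Q} {s : C_X → ZMod 2} {x : Q → ℝ}
    {A B : C_X → Finset Q} (hAf : ∀ j, A j ⊆ f j) (hBf : ∀ j, B j ⊆ f j)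
    (hAs : ∀ j, ((A j).card : ZMod 2) = s j) (hBs : ∀ j, ((B j).card : ZMod 2) = s j)
    (hx : ∀ i, 0 ≤ x i)
    (hxAB : ∀ j, ∀ i ∈ f j,
      x i = (if i ∈ A j then 1 / 2 else 0) + if i ∈ B j then 1 / 2 else 0) :
    SynFeasible f s x fun j => pairWeight (A j) (B j) := by
  refine ⟨fun j => ?_, fun j i hi => ?_, hx, fun j S _ => pairWeight_nonneg _ _ S⟩
  · simp only [sum_pairWeight, mem_filter, mem_powerset, hAf, hBf, hAs, hBs, and_self, if_true]
    norm_num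
  · simp only [sum_pairWeight, mem_filter, mem_powerset, hAf, hBf, hAs, hBs, true_and, hxAB j i hi]

lemma exists_synFeasible_half_indicator {f : C_X → Finset Q} {s : C_X → ZMod 2} {h : Finset Q}
    (heven : ∀ j, Even (f j ∩ h).card) (hs : ∀ j, f j ∩ h = ∅ → s j = 0) :
    ∃ w, SynFeasible f s (fun i => if i ∈ h then 1 / 2 else 0) w := by
  choose A hAh hAs using fun j => exists_subset_card_eq_zmod_two (hs j)
  have hBs (j : C_X) : (((f j ∩ h) \ A j).card : ZMod 2) = s j :=
    (natCast_card_sdiff_of_even (hAh j) (heven j)).trans (hAs j)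
  refine ⟨_, synFeasible_pairWeight (fun j => (hAh j).trans inter_subset_left)
    (fun j => sdiff_subset.trans inter_subset_left) hAs hBs
    (fun i => by positivity) fun j i hi => ?_⟩
  have hAi : i ∈ A j → i ∈ f j ∩ h := @hAh j i
  grind

end LP

/-- The half-integral vector supported on `g ∆ g'` extends to a feasible solution of
the syndrome-based LP whose objective value is `|g ∆ g'|/2 = |e| − 1 < |e|`. -/
theorem stmt9 {Q C_X : Type*} [Fintype Q] [DecidableEq Q]
    (f : C_X → Finset Q) (g g' : Finset Q)
    (hg : Even g.card) (hg' : Even g'.card)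
    (hfg : ∀ j, Even ((f j ∩ g).card)) (hfg' : ∀ j, Even ((f j ∩ g').card))
    (hX : ∀ j, (f j ∩ (g ∩ g')).Nonempty → (f j ∩ symmDiff g g').Nonempty)
    (e : Finset Q) (hesub : e ⊆ g ∪ g')
    (he1 : (e ∩ (g \ g')).card = (g \ g').card / 2)
    (he2 : (e ∩ (g' \ g)).card = ((g' \ g).card + 1) / 2)
    (he3 : (e ∩ (g ∩ g')).card = 1)
    (s : C_X → ZMod 2) (hs : ∀ j, s j = ((e ∩ f j).card : ZMod 2))
    (x : Q → ℝ) (hx : ∀ i, x i = if i ∈ symmDiff g g' then (1 / 2 : ℝ) else 0) :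
    (∃ w : C_X → Finset Q → ℝ, SynFeasible f s x w) ∧
      ∑ i, x i = ((symmDiff g g').card : ℝ) / 2 ∧
      ∑ i, x i = (e.card : ℝ) - 1 ∧
      ∑ i, x i < (e.card : ℝ) := by
  obtain rfl : x = fun i => if i ∈ symmDiff g g' then 1 / 2 else 0 := funext hx
  have hcheck (j : C_X) : Even (f j ∩ symmDiff g g').card := by
    rw [← inf_eq_inter, inf_symmDiff_distrib_left]
    exact even_card_symmDiff_iff.2 (iff_of_true (hfg j) (hfg' j))
  have hsyn (j : C_X) (hj : f j ∩ symmDiff g g' = ∅) : s j = 0 := by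
    rw [hs, inter_eq_empty_of_inter_symmDiff_eq_empty hesub (hX j) hj, card_empty, Nat.cast_zero]
  have hobj : ∑ i, (if i ∈ symmDiff g g' then (1 / 2 : ℝ) else 0)
      = ((symmDiff g g').card : ℝ) / 2 := by
    rw [sum_ite_mem, univ_inter, sum_const, nsmul_eq_mul, mul_one_div]
  have hcard : 2 * (e.card : ℝ) = (symmDiff g g').card + 2 := by
    have heven : Even (symmDiff g g').card := even_card_symmDiff_iff.2 (iff_of_true hg hg')
    exact_mod_cast he3 ▸ two_mul_card_eq_card_symmDiff_add hesub heven he1 he2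
  exact ⟨exists_synFeasible_half_indicator hcheck hsyn, hobj, by linarith, by linarith⟩
end

section
/- Let (g_0, …, g_{K−1}; i_0, …, i_{K−1}) be a cyclic stabilizer configuration of length K ≥ 3 on Q such that each |g_k| is even and |f_j ∩ g_k| is even for every j ∈ C_X and every k, and suppose every j ∈ C_X with f_j ∩ I ≠ ∅ satisfies f_j ∩ Δ ≠ ∅. Let e ⊆ g_0 ∪ ⋯ ∪ g_{K−1} satisfy e ∩ I = {i_0} and |e ∩ (g_k \ I)| = |g_k|/2 − 1 for every k, and define the syndrome s : C_X → ZMod 2 by s_j = |e ∩ f_j| mod 2. Define x : Q → ℝ by x_i = 1/2 for i ∈ Δ and x_i = 0 otherwise. Then there exists a family w such that (x, w) is feasible for the syndrome-based LP with syndrome s, and its objective value satisfies Σ_{i ∈ Q} x_i = |Δ|/2 = |e| − 1. In particular, the optimal value of this LP is strictly smaller than |e|. -/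
open Finset

/-- The iterated symmetric difference `g 0 ∆ g 1 ∆ ⋯ ∆ g (K-1)`. -/
def iterSD {Q : Type*} [DecidableEq Q] (K : ℕ) (g : ZMod K → Finset Q) : Finset Q :=
  (List.range K).foldr (fun k acc => symmDiff (g (k : ZMod K)) acc) ∅

/-!
Two cyclically consecutive sets share exactly one joint `i_k` and other pairs are disjoint, so
every joint lies in exactly two of the sets and every other point of their union in exactly one.
Hence `Δ` is the union without the joints. Each `g k` contains two joints, so
`|g k \ I| = |g k| - 2`, which is twice `|e ∩ (g k \ I)|`; summing over `k` and counting the one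
joint in `e` gives `|Δ| = 2 (|e| - 1)`.

For the LP, `|f j ∩ Δ|` is even, so any `A ⊆ f j ∩ Δ` with `|A| ≡ s j` has a complement in
`f j ∩ Δ` of the same parity, and the uniform distribution on these two sets has marginal `1/2` on
`f j ∩ Δ` and `0` elsewhere. Such an `A` exists unless `f j ∩ Δ = ∅` and `s j = 1`. If
`f j ∩ Δ = ∅`, then `f j` contains no joint either, so it misses `e` and `s j = 0`.
-/

section IterSD

variable {Q : Type*} [DecidableEq Q]

lemma mem_foldr_symmDiff_iff_odd_card {ι : Type*} [DecidableEq ι] (g : ι → Finset Q) (q : Q)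
    {l : List ι} (hl : l.Nodup) :
    q ∈ l.foldr (fun k acc => symmDiff (g k) acc) ∅ ↔ Odd #{k ∈ l.toFinset | q ∈ g k} := by
  induction l with
  | nil => simp
  | cons a l ih =>
    obtain ⟨ha, hl⟩ := List.nodup_cons.1 hl
    have ha' : a ∉ {k ∈ l.toFinset | q ∈ g k} := by simp [ha]
    rw [List.foldr_cons, mem_symmDiff, ih hl, List.toFinset_cons, filter_insert]
    split_ifs with h
    · simp [h, card_insert_of_notMem ha', Nat.odd_add_one]
    · simp [h]

variable (K : ℕ) [NeZero K] (g : ZMod K → Finset Q)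

lemma mem_iterSD_iff_odd_card (q : Q) : q ∈ iterSD K g ↔ Odd #{k | q ∈ g k} := by
  have hnodup : ((List.range K).map (Nat.cast : ℕ → ZMod K)).Nodup := by
    refine List.Nodup.map_on (fun a ha b hb hab => ?_) List.nodup_range
    rw [List.mem_range] at ha hb
    simpa [ZMod.val_cast_of_lt ha, ZMod.val_cast_of_lt hb] using congrArg ZMod.val hab
  have huniv : ((List.range K).map (Nat.cast : ℕ → ZMod K)).toFinset = univ := by
    ext k
    simpa using ⟨k.val, k.val_lt, ZMod.natCast_zmod_val k⟩
  -- `iterSD` coerces the list `List.range K` itself to `List (ZMod K)`.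
  have hlist : iterSD K g = ((List.range K).map (Nat.cast : ℕ → ZMod K)).foldr
      (fun k acc => symmDiff (g k) acc) ∅ := by
    rw [List.map_eq_flatMap]
    rfl
  rw [hlist, mem_foldr_symmDiff_iff_odd_card g q hnodup, huniv]

lemma odd_card_inter_iterSD_iff (F : Finset Q) :
    Odd #(F ∩ iterSD K g) ↔ Odd (∑ k, #(F ∩ g k)) := by
  have hdouble : ∑ k, #(F ∩ g k) = ∑ q ∈ F, #{k | q ∈ g k} := by
    simp_rw [← filter_mem_eq_inter]
    exact (sum_card_bipartiteAbove_eq_sum_card_bipartiteBelow fun q k => q ∈ g k).symm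
  rw [hdouble, odd_sum_iff_odd_card_odd, ← filter_mem_eq_inter]
  simp_rw [mem_iterSD_iff_odd_card]

lemma even_card_inter_iterSD {F : Finset Q} (h : ∀ k, Even #(F ∩ g k)) :
    Even #(F ∩ iterSD K g) := by
  rw [← Nat.not_odd_iff_even, odd_card_inter_iterSD_iff, Nat.not_odd_iff_even]
  exact even_sum _ fun k _ => h k

end IterSD

section HalfIntegralSolution

lemma exists_subset_natCast_card_eq {Q : Type*} {D : Finset Q} {t : ZMod 2}
    (h : D = ∅ → t = 0) : ∃ A ⊆ D, (#A : ZMod 2) = t := by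
  rcases D.eq_empty_or_nonempty with rfl | ⟨a, ha⟩
  · exact ⟨∅, Subset.rfl, by simp [h rfl]⟩
  · have zero_or_one : ∀ u : ZMod 2, u = 0 ∨ u = 1 := by decide
    rcases zero_or_one t with rfl | rfl
    · exact ⟨∅, empty_subset D, by simp⟩
    · exact ⟨{a}, by simpa using ha, by simp⟩

variable {Q C_X : Type*} [DecidableEq Q]

/-- The uniform distribution on two sets `A` and `B` (the point mass at `A` if `A = B`), giving the
weights `w j` of a half-integral LP solution. -/
noncomputable def halfPairWeight (A B : Finset Q) : Finset Q → ℝ :=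
  Pi.single A (1 / 2) + Pi.single B (1 / 2)

lemma halfPairWeight_nonneg (A B S : Finset Q) : 0 ≤ halfPairWeight A B S := by
  have hsingle (C : Finset Q) : (0 : Finset Q → ℝ) ≤ Pi.single C (1 / 2) :=
    Pi.single_nonneg.2 (by norm_num)
  exact add_nonneg (hsingle A) (hsingle B) S

lemma sum_halfPairWeight (A B : Finset Q) (𝒮 : Finset (Finset Q)) :
    ∑ S ∈ 𝒮, halfPairWeight A B S =
      (if A ∈ 𝒮 then 1 / 2 else 0) + (if B ∈ 𝒮 then 1 / 2 else 0) := by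
  simp [halfPairWeight, sum_add_distrib]

lemma natCast_card_sdiff_eq_of_even {A D : Finset Q} (hAD : A ⊆ D) (hD : Even #D) :
    (#(D \ A) : ZMod 2) = #A := by
  rw [← CharTwo.add_eq_zero, ← Nat.cast_add, card_sdiff_add_card_eq_card hAD]
  exact ZMod.natCast_eq_zero_iff_even.2 hD

lemma exists_synFeasible_half {f : C_X → Finset Q} {s : C_X → ZMod 2} {D : Finset Q}
    (heven : ∀ j, Even #(f j ∩ D)) (hzero : ∀ j, Disjoint (f j) D → s j = 0) :
    ∃ w, SynFeasible f s (fun i => if i ∈ D then 1 / 2 else 0) w := by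
  have hA : ∀ j, ∃ A ⊆ f j ∩ D, (#A : ZMod 2) = s j := fun j =>
    exists_subset_natCast_card_eq fun h => hzero j (disjoint_iff_inter_eq_empty.2 h)
  choose A hAD hAs using hA
  have hBs : ∀ j, (#((f j ∩ D) \ A j) : ZMod 2) = s j := fun j =>
    (natCast_card_sdiff_eq_of_even (hAD j) (heven j)).trans (hAs j)
  have hAf : ∀ j, A j ⊆ f j := fun j => (hAD j).trans inter_subset_left
  have hBf : ∀ j, (f j ∩ D) \ A j ⊆ f j := fun j => sdiff_subset.trans inter_subset_left
  refine ⟨fun j => halfPairWeight (A j) ((f j ∩ D) \ A j), fun j => ?_, fun j i hi => ?_,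
    fun i => by positivity, fun j S _ => halfPairWeight_nonneg _ _ S⟩
  · simp only [sum_halfPairWeight, mem_filter, mem_powerset, hAf, hBf, hAs, hBs, and_self, if_true]
    norm_num
  · have hAi : i ∈ A j → i ∈ D := fun h => (mem_inter.1 (hAD j h)).2
    simp only [sum_halfPairWeight, mem_filter, mem_powerset, hAf, hBf, hAs, hBs, true_and,
      mem_sdiff, mem_inter, hi]
    by_cases hiA : i ∈ A j
    · simp [hiA, hAi hiA]
    · simp [hiA]

end HalfIntegralSolution

/-- A cyclic stabilizer configuration of length `K ≥ 3`: consecutive sets `g k`, `g (k + 1)` meet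
exactly in the joint `i_k = idx k`, and all other pairs of distinct sets are disjoint. The set `I`
of all joints is `univ.image idx`. -/
structure IsCyclicConfiguration {Q : Type*} [DecidableEq Q] {K : ℕ}
    (g : ZMod K → Finset Q) (idx : ZMod K → Q) : Prop where
  three_le : 3 ≤ K
  injective : Function.Injective idx
  inter_succ : ∀ k, g k ∩ g (k + 1) = {idx k}
  inter_far : ∀ k k', k' ≠ k - 1 → k' ≠ k → k' ≠ k + 1 → g k ∩ g k' = ∅

namespace IsCyclicConfiguration

variable {Q : Type*} [DecidableEq Q] {K : ℕ} {g : ZMod K → Finset Q} {idx : ZMod K → Q}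

lemma one_ne_zero (h : IsCyclicConfiguration g idx) : (1 : ZMod K) ≠ 0 := by
  have : Fact (1 < K) := ⟨by have := h.three_le; omega⟩
  exact _root_.one_ne_zero

lemma idx_mem_inter_succ (h : IsCyclicConfiguration g idx) (k : ZMod K) :
    idx k ∈ g k ∩ g (k + 1) := by
  rw [h.inter_succ]
  exact mem_singleton_self _

lemma eq_succ_of_mem_of_mem (h : IsCyclicConfiguration g idx) {q : Q} {k l : ZMod K}
    (hk : q ∈ g k) (hl : q ∈ g l) (hkl : k ≠ l) :
    l = k + 1 ∧ q = idx k ∨ k = l + 1 ∧ q = idx l := by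
  have eq_idx {m : ZMod K} (hm : q ∈ g m) (hm' : q ∈ g (m + 1)) : q = idx m :=
    mem_singleton.1 (h.inter_succ m ▸ mem_inter.2 ⟨hm, hm'⟩)
  by_cases hsucc : l = k + 1
  · subst hsucc
    exact .inl ⟨rfl, eq_idx hk hl⟩
  by_cases hpred : l = k - 1
  · obtain rfl : k = l + 1 := by rw [hpred, sub_add_cancel]
    exact .inr ⟨rfl, eq_idx hl hk⟩
  · have hempty := h.inter_far k l hpred hkl.symm hsucc
    exact absurd (hempty ▸ mem_inter.2 ⟨hk, hl⟩) (notMem_empty q)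

lemma idx_mem_iff (h : IsCyclicConfiguration g idx) (k l : ZMod K) :
    idx k ∈ g l ↔ l = k ∨ l = k + 1 := by
  obtain ⟨hk, hk'⟩ := mem_inter.1 (h.idx_mem_inter_succ k)
  refine ⟨fun hl => or_iff_not_imp_left.2 fun hlk => ?_, ?_⟩
  · rcases h.eq_succ_of_mem_of_mem hk hl (Ne.symm hlk) with ⟨hsucc, -⟩ | ⟨-, hidx⟩
    · exact hsucc
    · exact absurd (h.injective hidx).symm hlk
  · rintro (rfl | rfl)
    exacts [hk, hk']

variable [NeZero K]

lemma eq_of_mem_of_mem (h : IsCyclicConfiguration g idx) {q : Q} {k l : ZMod K}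
    (hq : q ∉ univ.image idx) (hk : q ∈ g k) (hl : q ∈ g l) : k = l := by
  by_contra hkl
  rcases h.eq_succ_of_mem_of_mem hk hl hkl with ⟨-, rfl⟩ | ⟨-, rfl⟩ <;> simp at hq

lemma card_filter_idx_mem (h : IsCyclicConfiguration g idx) (k : ZMod K) :
    #{l | idx k ∈ g l} = 2 := by
  have hpair : ({l | idx k ∈ g l} : Finset (ZMod K)) = {k, k + 1} := by
    ext l
    simp [h.idx_mem_iff]
  rw [hpair, card_pair (by simpa using h.one_ne_zero)]

lemma iterSD_eq (h : IsCyclicConfiguration g idx) :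
    iterSD K g = univ.biUnion g \ univ.image idx := by
  ext q
  rw [mem_iterSD_iff_odd_card, mem_sdiff]
  by_cases hq : q ∈ univ.image idx
  · obtain ⟨k, -, rfl⟩ := mem_image.1 hq
    simp [h.card_filter_idx_mem]
  · have hle : #{k | q ∈ g k} ≤ 1 := card_le_one.2 fun k hk l hl =>
      h.eq_of_mem_of_mem hq (mem_filter.1 hk).2 (mem_filter.1 hl).2
    have hodd : Odd #{k | q ∈ g k} ↔ 0 < #{k | q ∈ g k} := by
      interval_cases #{k | q ∈ g k} <;> simp
    simp [hodd, hq, card_pos, filter_nonempty_iff]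

lemma biUnion_subset_iterSD_union (h : IsCyclicConfiguration g idx) :
    univ.biUnion g ⊆ iterSD K g ∪ univ.image idx := by
  rw [h.iterSD_eq, sdiff_union_self_eq_union]
  exact subset_union_left

lemma disjoint_of_disjoint_iterSD (h : IsCyclicConfiguration g idx) {e F : Finset Q}
    (he : e ⊆ univ.biUnion g)
    (hF : (F ∩ univ.image idx).Nonempty → (F ∩ iterSD K g).Nonempty)
    (hdisj : Disjoint F (iterSD K g)) : Disjoint e F := by
  have hI : Disjoint F (univ.image idx) := by
    contrapose! hdisj
    rw [not_disjoint_iff_nonempty_inter] at hdisj ⊢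
    exact hF hdisj
  exact ((disjoint_union_right.2 ⟨hdisj, hI⟩).mono_right
    (he.trans h.biUnion_subset_iterSD_union)).symm

lemma card_inter_image_idx (h : IsCyclicConfiguration g idx) (k : ZMod K) :
    #(g k ∩ univ.image idx) = 2 := by
  have hpair : g k ∩ univ.image idx = ({k, k - 1} : Finset (ZMod K)).image idx := by
    ext q
    simp only [mem_inter, mem_image, mem_univ, true_and, mem_insert, mem_singleton]
    constructor
    · rintro ⟨hq, l, rfl⟩
      exact ⟨l, ((h.idx_mem_iff l k).1 hq).imp Eq.symm fun hk => (sub_eq_of_eq_add hk).symm, rfl⟩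
    · rintro ⟨l, hl, rfl⟩
      exact ⟨(h.idx_mem_iff l k).2 (hl.imp Eq.symm fun hl => by rw [hl, sub_add_cancel]), l, rfl⟩
  rw [hpair, card_image_of_injective _ h.injective,
    card_pair fun hk => h.one_ne_zero (sub_eq_self.1 hk.symm)]

lemma card_sdiff_image_idx (h : IsCyclicConfiguration g idx) {S : Finset Q}
    (hS : S ⊆ univ.biUnion g) :
    #(S \ univ.image idx) = ∑ k, #(S ∩ (g k \ univ.image idx)) := by
  have hcover : S \ univ.image idx = univ.biUnion fun k => S ∩ (g k \ univ.image idx) := by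
    have hsdiff : (univ.biUnion fun k => g k \ univ.image idx) =
        univ.biUnion g \ univ.image idx := by
      ext q
      simp
    rw [← inter_biUnion, hsdiff, ← inter_sdiff_assoc, inter_eq_left.2 hS]
  rw [hcover, card_biUnion]
  refine fun k _ l _ hkl => disjoint_left.2 fun q hk hl => hkl ?_
  simp only [mem_inter, mem_sdiff] at hk hl
  exact h.eq_of_mem_of_mem hk.2.2 hk.2.1 hl.2.1

lemma card_iterSD (h : IsCyclicConfiguration g idx) :
    #(iterSD K g) = ∑ k, (#(g k) - 2) := by
  rw [h.iterSD_eq, h.card_sdiff_image_idx Subset.rfl]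
  refine sum_congr rfl fun k _ => ?_
  rw [inter_eq_right.2 (sdiff_subset.trans (subset_biUnion_of_mem g (mem_univ k))), card_sdiff,
    inter_comm, h.card_inter_image_idx]

lemma card_iterSD_add_two (h : IsCyclicConfiguration g idx) (hgEven : ∀ k, Even #(g k))
    {e : Finset Q} (he : e ⊆ univ.biUnion g) (heI : #(e ∩ univ.image idx) = 1)
    (hek : ∀ k, #(e ∩ (g k \ univ.image idx)) = #(g k) / 2 - 1) :
    #(iterSD K g) + 2 = 2 * #e := by
  have hΔ : #(iterSD K g) = 2 * #(e \ univ.image idx) := by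
    rw [h.card_iterSD, h.card_sdiff_image_idx he, mul_sum]
    refine sum_congr rfl fun k _ => ?_
    rw [hek, Nat.mul_sub, Nat.mul_div_cancel' (hgEven k).two_dvd]
  have := card_sdiff_add_card_inter e (univ.image idx)
  omega

end IsCyclicConfiguration

/-- For a cyclic stabilizer configuration, the half-integral vector supported on the
iterated symmetric difference `Δ` extends to a feasible solution of the syndrome-based
LP whose objective value is `|Δ|/2 = |e| − 1 < |e|`. -/
theorem stmt10 {Q C_X : Type*} [Fintype Q] [DecidableEq Q] (K : ℕ) [NeZero K]
    (hK : 3 ≤ K)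
    (f : C_X → Finset Q) (g : ZMod K → Finset Q) (idx : ZMod K → Q)
    (hidx : Function.Injective idx)
    (hadj : ∀ k, g k ∩ g (k + 1) = {idx k})
    (hfar : ∀ k k' : ZMod K, k' ≠ k - 1 → k' ≠ k → k' ≠ k + 1 → g k ∩ g k' = ∅)
    (hgEven : ∀ k, Even (g k).card)
    (hfgEven : ∀ j k, Even ((f j ∩ g k).card))
    (hX : ∀ j, (f j ∩ Finset.univ.image idx).Nonempty →
      (f j ∩ iterSD K g).Nonempty)
    (e : Finset Q) (hesub : e ⊆ Finset.univ.biUnion g)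
    (heI : e ∩ Finset.univ.image idx = {idx 0})
    (hek : ∀ k, (e ∩ (g k \ Finset.univ.image idx)).card = (g k).card / 2 - 1)
    (s : C_X → ZMod 2) (hs : ∀ j, s j = ((e ∩ f j).card : ZMod 2))
    (x : Q → ℝ) (hx : ∀ i, x i = if i ∈ iterSD K g then (1 / 2 : ℝ) else 0) :
    (∃ w : C_X → Finset Q → ℝ, SynFeasible f s x w) ∧
      ∑ i, x i = ((iterSD K g).card : ℝ) / 2 ∧
      ∑ i, x i = (e.card : ℝ) - 1 ∧
      ∑ i, x i < (e.card : ℝ) := by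
  have hcfg : IsCyclicConfiguration g idx := ⟨hK, hidx, hadj, hfar⟩
  obtain rfl : x = fun i => if i ∈ iterSD K g then 1 / 2 else 0 := funext hx
  have hcard : ((iterSD K g).card : ℝ) + 2 = 2 * e.card := by
    exact_mod_cast hcfg.card_iterSD_add_two hgEven hesub (by rw [heI, card_singleton]) hek
  have hobj : ∑ i, (if i ∈ iterSD K g then (1 / 2 : ℝ) else 0) = (iterSD K g).card / 2 := by
    rw [sum_ite_mem, univ_inter, sum_const, nsmul_eq_mul, mul_one_div]
  refine ⟨exists_synFeasible_half (fun j => even_card_inter_iterSD K g (hfgEven j)) fun j hj => ?_,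
    hobj, by linarith, by linarith⟩
  have hej : Disjoint e (f j) := hcfg.disjoint_of_disjoint_iterSD hesub (hX j) hj
  rw [hs, disjoint_iff_inter_eq_empty.1 hej, card_empty, Nat.cast_zero]
end

section
/- Suppose (x, w) is feasible for the syndrome-based LP with syndrome s, and every value x_i and every value w_{j,S} lies in {0, 1}. Then for every j ∈ C_X, the cardinality of {i ∈ f_j : x_i = 1} is congruent to s_j modulo 2; that is, the 0/1 vector x satisfies every parity check of the syndrome. -/
open Finset

/-! At a fixed check `j`, the weights `w j` form a probability distribution on the subsets of `f j`
of parity `s j`, and `x i` is the probability that `i` belongs to the random subset. An event of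
probability `0` or `1` has the same outcome on every set of positive weight, so if `x` is `0`/`1` on
`f j` then every set of positive weight equals `{i ∈ f j | x i = 1}`, which therefore has
parity `s j`. -/

section Marginal

variable {Q M : Type*} [DecidableEq Q] [AddCommMonoid M]

/-- The marginal at `i` of a weight `w` on a family `𝒮` of finite sets: the total weight of the
members of `𝒮` containing `i`. The second constraint of the LP says that `x i` is the marginal at `i`
of `w j`, for every check `j` with `i ∈ f j`. -/
def marginal (𝒮 : Finset (Finset Q)) (w : Finset Q → M) (i : Q) : M :=
  ∑ S ∈ 𝒮 with i ∈ S, w S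

variable [PartialOrder M] [IsOrderedCancelAddMonoid M]
  {𝒮 : Finset (Finset Q)} {w : Finset Q → M} {S : Finset Q} {i : Q}

theorem marginal_pos (hw : ∀ T ∈ 𝒮, 0 ≤ w T) (hS : S ∈ 𝒮) (hwS : 0 < w S) (hi : i ∈ S) :
    0 < marginal 𝒮 w i :=
  sum_pos' (fun T hT => hw T (mem_of_mem_filter T hT)) ⟨S, mem_filter.2 ⟨hS, hi⟩, hwS⟩

theorem marginal_lt_sum (hw : ∀ T ∈ 𝒮, 0 ≤ w T) (hS : S ∈ 𝒮) (hwS : 0 < w S) (hi : i ∉ S) :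
    marginal 𝒮 w i < ∑ T ∈ 𝒮, w T :=
  sum_lt_sum_of_subset (filter_subset _ _) hS (fun h => hi (mem_filter.1 h).2) hwS
    fun T hT _ => hw T hT

theorem mem_iff_marginal_eq_sum (hw : ∀ T ∈ 𝒮, 0 ≤ w T) (hS : S ∈ 𝒮) (hwS : 0 < w S)
    (hi : marginal 𝒮 w i = 0 ∨ marginal 𝒮 w i = ∑ T ∈ 𝒮, w T) :
    i ∈ S ↔ marginal 𝒮 w i = ∑ T ∈ 𝒮, w T where
  mp hiS := hi.resolve_left (marginal_pos hw hS hwS hiS).ne'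
  mpr h := by_contra fun hiS => (marginal_lt_sum hw hS hwS hiS).ne h

end Marginal

/-- The subsets of `t` whose cardinality has parity `b`; the LP weights at a check `j` are indexed
by `paritySubsets (f j) (s j)`. -/
def paritySubsets {Q : Type*} (t : Finset Q) (b : ZMod 2) : Finset (Finset Q) :=
  t.powerset.filter fun S => (S.card : ZMod 2) = b

theorem mem_paritySubsets {Q : Type*} {t S : Finset Q} {b : ZMod 2} :
    S ∈ paritySubsets t b ↔ S ⊆ t ∧ (S.card : ZMod 2) = b := by
  rw [paritySubsets, mem_filter, mem_powerset]

namespace SynFeasible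

variable {Q C_X : Type*} [DecidableEq Q] {f : C_X → Finset Q} {s : C_X → ZMod 2}
  {x : Q → ℝ} {w : C_X → Finset Q → ℝ} {j : C_X} {S : Finset Q}

theorem sum_eq_one (h : SynFeasible f s x w) (j : C_X) :
    ∑ S ∈ paritySubsets (f j) (s j), w j S = 1 :=
  h.1 j

theorem marginal_eq (h : SynFeasible f s x w) {i : Q} (hi : i ∈ f j) :
    marginal (paritySubsets (f j) (s j)) (w j) i = x i := by
  rw [marginal, paritySubsets, filter_filter, h.2.1 j i hi]

theorem weight_nonneg (h : SynFeasible f s x w) : ∀ S ∈ paritySubsets (f j) (s j), 0 ≤ w j S :=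
  h.2.2.2 j

theorem exists_weight_pos (h : SynFeasible f s x w) (j : C_X) :
    ∃ S ∈ paritySubsets (f j) (s j), 0 < w j S := by
  refine (sum_pos_iff_of_nonneg h.weight_nonneg).1 ?_
  rw [h.sum_eq_one]
  exact one_pos

theorem filter_eq_of_weight_pos (h : SynFeasible f s x w) (hx : ∀ i ∈ f j, x i = 0 ∨ x i = 1)
    (hS : S ∈ paritySubsets (f j) (s j)) (hwS : 0 < w j S) :
    (f j).filter (fun i => x i = 1) = S := by
  have mem_iff : ∀ i ∈ f j, (i ∈ S ↔ x i = 1) := fun i hi => by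
    rw [← h.marginal_eq hi, ← h.sum_eq_one j]
    apply mem_iff_marginal_eq_sum h.weight_nonneg hS hwS
    rw [h.marginal_eq hi, h.sum_eq_one]
    exact hx i hi
  rw [← filter_congr mem_iff, filter_mem_eq_inter,
    inter_eq_right.2 (mem_paritySubsets.1 hS).1]

end SynFeasible

theorem stmt11_general {Q C_X : Type*} [DecidableEq Q] {f : C_X → Finset Q} {s : C_X → ZMod 2}
    {x : Q → ℝ} {w : C_X → Finset Q → ℝ} (hfeas : SynFeasible f s x w) {j : C_X}
    (hx01 : ∀ i ∈ f j, x i = 0 ∨ x i = 1) :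
    (((f j).filter (fun i => x i = 1)).card : ZMod 2) = s j := by
  obtain ⟨S, hS, hwS⟩ := hfeas.exists_weight_pos j
  rw [hfeas.filter_eq_of_weight_pos hx01 hS hwS]
  exact (mem_paritySubsets.1 hS).2

/-- An integral feasible solution of the syndrome-based LP satisfies every
parity check of the syndrome. -/
theorem stmt11 {Q C_X : Type*} [DecidableEq Q]
    (f : C_X → Finset Q) (s : C_X → ZMod 2)
    (x : Q → ℝ) (w : C_X → Finset Q → ℝ)
    (hfeas : SynFeasible f s x w)
    (hx01 : ∀ i, x i = 0 ∨ x i = 1)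
    (hw01 : ∀ j, ∀ S ∈ (f j).powerset.filter (fun S => (S.card : ZMod 2) = s j),
      w j S = 0 ∨ w j S = 1) :
    ∀ j, ((((f j).filter (fun i => x i = 1)).card : ZMod 2) = s j) :=
  fun _ => stmt11_general hfeas fun i _ => hx01 i
end

section
/- Let y ⊆ Q satisfy |y ∩ f_j| ≡ s_j (mod 2) for every j ∈ C_X. Define x : Q → ℝ by x_i = 1 if i ∈ y and x_i = 0 otherwise, and define w_{j,S} = 1 if S = y ∩ f_j and w_{j,S} = 0 otherwise. Then (x, w) is feasible for the syndrome-based LP with syndrome s, and its objective value equals |y|. Consequently, the optimal value of the syndrome-based LP is at most the minimum weight of a binary vector with syndrome s. -/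
open Finset

/- For a point mass `w j` this evaluates both families of LP equalities: `p` is the parity
condition, alone for normalization and together with membership of the qubit for its marginal. -/
theorem sum_filter_single_of_mem {ι M : Type*} [DecidableEq ι] [AddCommMonoid M]
    {A : Finset ι} {i : ι} (hi : i ∈ A) (p : ι → Prop) [DecidablePred p] (a : M) :
    ∑ k ∈ A.filter p, Pi.single (M := fun _ => M) i a k = if p i then a else 0 := by
  simp only [sum_pi_single', mem_filter, hi, true_and]

theorem sum_indicator_one_of_subset {α R : Type*} [AddCommMonoidWithOne R]
    {y t : Finset α} (h : y ⊆ t) :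
    ∑ i ∈ t, (y : Set α).indicator (1 : α → R) i = y.card := by
  rw [sum_indicator_subset _ h]
  simp only [Pi.one_apply, sum_const, nsmul_one]

theorem synFeasible_indicator_single {Q C_X : Type*} [DecidableEq Q]
    {f : C_X → Finset Q} {s : C_X → ZMod 2} {y : Finset Q}
    (hy : ∀ j, ((y ∩ f j).card : ZMod 2) = s j) :
    SynFeasible f s ((y : Set Q).indicator 1) (fun j => Pi.single (y ∩ f j) 1) := by
  have config_mem (j : C_X) : y ∩ f j ∈ (f j).powerset := mem_powerset.mpr inter_subset_right
  refine ⟨fun j => ?normalized, fun j i hi => ?marginal, fun i => ?x_nonneg,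
    fun j S _ => ?w_nonneg⟩
  case normalized =>
    rw [sum_filter_single_of_mem (config_mem j), if_pos (hy j)]
  case marginal =>
    have mem_iff : i ∈ y ∩ f j ↔ i ∈ y := by simp only [mem_inter, hi, and_true]
    rw [sum_filter_single_of_mem (config_mem j)]
    simp only [hy j, mem_iff, true_and, Set.indicator_apply, mem_coe, Pi.one_apply]
  case x_nonneg => exact Set.indicator_apply_nonneg fun _ => zero_le_one
  case w_nonneg =>
    have single_nonneg : (0 : Finset Q → ℝ) ≤ Pi.single (y ∩ f j) 1 :=
      Pi.single_nonneg.mpr zero_le_one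
    exact single_nonneg S

/-- The indicator vector of any set `y` with syndrome `s` is feasible for the
syndrome-based LP with objective value `|y|`; consequently, the optimal value of the
LP is at most the minimum weight of a binary vector with syndrome `s`. -/
theorem stmt12 {Q C_X : Type*} [Fintype Q] [DecidableEq Q]
    (f : C_X → Finset Q) (s : C_X → ZMod 2)
    (y : Finset Q) (hy : ∀ j, (((y ∩ f j).card : ZMod 2) = s j))
    (x : Q → ℝ) (hx : ∀ i, x i = if i ∈ y then (1 : ℝ) else 0)
    (w : C_X → Finset Q → ℝ)
    (hw : ∀ j S, w j S = if S = y ∩ f j then (1 : ℝ) else 0) :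
    SynFeasible f s x w ∧ (∑ i, x i = (y.card : ℝ)) ∧
      (∀ (xopt : Q → ℝ) (wopt : C_X → Finset Q → ℝ), SynFeasible f s xopt wopt →
        (∀ (x₂ : Q → ℝ) (w₂ : C_X → Finset Q → ℝ), SynFeasible f s x₂ w₂ →
          ∑ i, xopt i ≤ ∑ i, x₂ i) →
        ∑ i, xopt i ≤ (y.card : ℝ)) := by
  obtain rfl : x = (y : Set Q).indicator 1 := by
    funext i
    simp only [hx, Set.indicator_apply, mem_coe, Pi.one_apply]
  obtain rfl : w = fun j => Pi.single (y ∩ f j) 1 := by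
    funext j S
    rw [hw, Pi.single_apply]
  have feasible := synFeasible_indicator_single hy
  have objective : ∑ i, (y : Set Q).indicator (1 : Q → ℝ) i = y.card :=
    sum_indicator_one_of_subset (subset_univ y)
  exact ⟨feasible, objective, fun _ _ _ minimal => (minimal _ _ feasible).trans_eq objective⟩
end

section
/- Let (g_0, …, g_{K−1}; i_0, …, i_{K−1}) be a cyclic stabilizer configuration of length K ≥ 3 on Q, and let f ⊆ Q be a finite set such that |f ∩ g_k| is even for every k, f ∩ Δ = ∅, and f ∩ I ≠ ∅. Then I ⊆ f. -/
open Finset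

/-!
Since `F ∩ Δ = ∅`, every point of `F` lies in an even number of the sets `g k`.
If `idx k ∈ F`, then `F ∩ g (k + 1)` has even size and contains `idx k`, so it contains a second
point `x`. The number of sets `g j` through `x` is even too, so some set other than `g (k + 1)`
contains `x`. That set is a neighbour of `g (k + 1)`, so `x` is `idx k` or `idx (k + 1)`, hence
`idx (k + 1)`. Thus membership in `F` propagates once around the cycle.
-/

theorem exists_mem_ne_of_even_card {α : Type*} {s : Finset α} {a : α} (hs : Even #s)
    (ha : a ∈ s) : ∃ b ∈ s, b ≠ a := by
  have card_pos : 0 < #s := Finset.card_pos.2 ⟨a, ha⟩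
  have one_lt_card : 1 < #s := by grind
  exact Finset.exists_mem_ne one_lt_card a

theorem nodup_map_natCast_zmod_range (K : ℕ) :
    ((List.range K).map ((↑) : ℕ → ZMod K)).Nodup := by
  refine List.nodup_range.map_on fun m hm n hn hmn ↦ ?_
  rw [← ZMod.val_cast_of_lt (List.mem_range.1 hm), hmn, ZMod.val_cast_of_lt (List.mem_range.1 hn)]

theorem toFinset_map_natCast_zmod_range (K : ℕ) [NeZero K] :
    ((List.range K).map ((↑) : ℕ → ZMod K)).toFinset = univ := by
  refine eq_univ_iff_forall.2 fun k ↦ List.mem_toFinset.2 (List.mem_map.2 ?_)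
  exact ⟨k.val, List.mem_range.2 k.val_lt, k.natCast_zmod_val⟩

theorem forall_zmod_of_forall_add_one {K : ℕ} [NeZero K] {p : ZMod K → Prop} {a : ZMod K}
    (ha : p a) (hp : ∀ k, p k → p (k + 1)) (k : ZMod K) : p k := by
  have add_natCast (n : ℕ) : p (a + n) := by
    induction n with
    | zero => simpa using ha
    | succ n ih => simpa [add_assoc] using hp _ ih
  simpa using add_natCast (k - a).val

section

open scoped symmDiff

variable {Q : Type*} [DecidableEq Q]

theorem mem_foldr_symmDiff {ι : Type*} (g : ι → Finset Q) (l : List ι) (x : Q) :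
    x ∈ l.foldr (fun k s ↦ g k ∆ s) ∅ ↔ Odd (l.countP (x ∈ g ·)) := by
  induction l with
  | nil => simp
  | cons k l ih =>
    rw [List.foldr_cons, mem_symmDiff, ih, List.countP_cons]
    by_cases hx : x ∈ g k <;> simp [hx, Nat.odd_add_one]

theorem eq_idx_sub_one_or_eq_idx_of_mem_of_mem {ι : Type*} [AddGroup ι] [One ι]
    {g : ι → Finset Q} {idx : ι → Q} (hadj : ∀ k, g k ∩ g (k + 1) = {idx k})
    (hfar : ∀ k j, j ≠ k - 1 → j ≠ k → j ≠ k + 1 → g k ∩ g j = ∅)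
    {k j : ι} {x : Q} (hjk : j ≠ k) (hxk : x ∈ g k) (hxj : x ∈ g j) :
    x = idx (k - 1) ∨ x = idx k := by
  have eq_idx {i : ι} (hi : x ∈ g i) (hi' : x ∈ g (i + 1)) : x = idx i :=
    mem_singleton.1 (hadj i ▸ mem_inter.2 ⟨hi, hi'⟩)
  by_cases hpred : j = k - 1
  · subst hpred
    exact .inl (eq_idx hxj (by rwa [sub_add_cancel]))
  by_cases hsucc : j = k + 1
  · subst hsucc
    exact .inr (eq_idx hxk hxj)
  have hx : x ∈ g k ∩ g j := mem_inter.2 ⟨hxk, hxj⟩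
  simp [hfar k j hpred hjk hsucc] at hx

variable {K : ℕ} [NeZero K] {g : ZMod K → Finset Q}

theorem mem_iterSD {x : Q} : x ∈ iterSD K g ↔ Odd #{k | x ∈ g k} := by
  have count_eq : ((List.range K).map ((↑) : ℕ → ZMod K)).countP (x ∈ g ·) = #{k | x ∈ g k} := by
    rw [← (nodup_map_natCast_zmod_range K).card_eq_countP, toFinset_map_natCast_zmod_range]
  rw [← count_eq, ← mem_foldr_symmDiff]
  -- `iterSD` coerces `List.range K` to a list in `ZMod K` through the list monad.
  simp [iterSD, List.map_eq_flatMap]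

theorem exists_ne_mem_of_notMem_iterSD {x : Q} {k : ZMod K} (hxΔ : x ∉ iterSD K g)
    (hxk : x ∈ g k) : ∃ j ≠ k, x ∈ g j := by
  have even_card : Even #{j | x ∈ g j} := by rwa [mem_iterSD, Nat.not_odd_iff_even] at hxΔ
  obtain ⟨j, hj, hjk⟩ := exists_mem_ne_of_even_card even_card (mem_filter_univ k |>.2 hxk)
  exact ⟨j, hjk, mem_filter_univ j |>.1 hj⟩

theorem idx_add_one_mem_of_idx_mem {idx : ZMod K → Q} (hadj : ∀ k, g k ∩ g (k + 1) = {idx k})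
    (hfar : ∀ k j, j ≠ k - 1 → j ≠ k → j ≠ k + 1 → g k ∩ g j = ∅)
    {F : Finset Q} (hFΔ : Disjoint F (iterSD K g)) {k : ZMod K}
    (hFg : Even #(F ∩ g (k + 1))) (hk : idx k ∈ F) : idx (k + 1) ∈ F := by
  have idx_mem : idx k ∈ g (k + 1) := mem_of_mem_inter_right (hadj k ▸ mem_singleton_self _)
  obtain ⟨x, hx, hne⟩ := exists_mem_ne_of_even_card hFg (mem_inter.2 ⟨hk, idx_mem⟩)
  obtain ⟨hxF, hxg⟩ := mem_inter.1 hx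
  obtain ⟨j, hj, hxj⟩ := exists_ne_mem_of_notMem_iterSD (disjoint_left.1 hFΔ hxF) hxg
  rcases eq_idx_sub_one_or_eq_idx_of_mem_of_mem hadj hfar hj hxg hxj with hpred | hsucc
  · exact absurd (by rwa [add_sub_cancel_right] at hpred) hne
  · rwa [← hsucc]

end

/-- For a cyclic stabilizer configuration, a set `F` that meets each `g k` evenly,
is disjoint from the iterated symmetric difference `Δ`, and meets the set `I`
of intersection points, must contain all of `I`. -/
theorem stmt14 {Q : Type*} [DecidableEq Q] (K : ℕ) [NeZero K] (hK : 3 ≤ K)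
    (g : ZMod K → Finset Q) (idx : ZMod K → Q)
    (hidx : Function.Injective idx)
    (hadj : ∀ k, g k ∩ g (k + 1) = {idx k})
    (hfar : ∀ k k' : ZMod K, k' ≠ k - 1 → k' ≠ k → k' ≠ k + 1 → g k ∩ g k' = ∅)
    (F : Finset Q)
    (hFg : ∀ k, Even ((F ∩ g k).card))
    (hFΔ : F ∩ iterSD K g = ∅)
    (hFI : (F ∩ Finset.univ.image idx).Nonempty) :
    Finset.univ.image idx ⊆ F := by
  obtain ⟨x, hx⟩ := hFI
  obtain ⟨hxF, hxI⟩ := mem_inter.1 hx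
  obtain ⟨k, -, rfl⟩ := mem_image.1 hxI
  have idx_add_one_mem (j : ZMod K) : idx j ∈ F → idx (j + 1) ∈ F :=
    idx_add_one_mem_of_idx_mem hadj hfar (disjoint_iff_inter_eq_empty.2 hFΔ) (hFg (j + 1))
  exact image_subset_iff.2 fun j _ ↦ forall_zmod_of_forall_add_one hxF idx_add_one_mem j
end

section
/- Let (g_0, …, g_{K−1}; i_0, …, i_{K−1}) be a cyclic stabilizer configuration of length K ≥ 3 on Q. Then the iterated symmetric difference satisfies Δ = (g_0 ∪ g_1 ∪ ⋯ ∪ g_{K−1}) \ I, and |Δ| = (Σ_{k=0}^{K−1} |g_k|) − 2K. -/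
open Finset

/-!
A point lies in an iterated symmetric difference iff it lies in an odd number of the sets. In a
stabilizer configuration each intersection point lies in exactly two of the sets: in a third set
it would coincide with another intersection point. Every other point of the union lies in exactly
one set. Hence the symmetric difference is the union without the intersection points, and double
counting incidences, with weight two at the intersection points, gives its cardinality.
-/

section FoldSymmDiff

variable {ι α : Type*} [DecidableEq α] {s : Finset ι} {f : ι → Finset α} {t : Finset α} {a : α}

theorem mem_fold_symmDiff_iff_odd_card :
    a ∈ s.fold symmDiff ∅ f ↔ Odd #{k ∈ s | a ∈ f k} := by
  induction s using Finset.cons_induction with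
  | empty => simp
  | cons k s hk ih =>
    rw [fold_cons, mem_symmDiff, ih, filter_cons]
    split_ifs with ha
    · simp [ha, Nat.odd_add_one]
    · simp [ha]

theorem fold_symmDiff_eq_biUnion_sdiff (heven : ∀ a ∈ t, Even #{k ∈ s | a ∈ f k})
    (hodd : ∀ a ∈ s.biUnion f \ t, Odd #{k ∈ s | a ∈ f k}) :
    s.fold symmDiff ∅ f = s.biUnion f \ t := by
  ext a
  rw [mem_fold_symmDiff_iff_odd_card]
  refine ⟨fun ha ↦ mem_sdiff.2 ⟨?_, fun hat ↦ Nat.not_odd_iff_even.2 (heven a hat) ha⟩, hodd a⟩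
  obtain ⟨k, hk⟩ := card_pos.1 ha.pos
  exact mem_biUnion.2 ⟨k, mem_filter.1 hk⟩

theorem sum_card_eq_sum_card_filter_mem (ht : s.biUnion f ⊆ t) :
    ∑ k ∈ s, #(f k) = ∑ a ∈ t, #{k ∈ s | a ∈ f k} := by
  have hf (k) (hk : k ∈ s) : f k = {a ∈ t | a ∈ f k} := by
    rw [filter_mem_eq_inter, inter_eq_right.2 ((subset_biUnion_of_mem f hk).trans ht)]
  rw [sum_congr rfl fun k hk ↦ congrArg card (hf k hk)]
  exact sum_card_bipartiteAbove_eq_sum_card_bipartiteBelow fun k a ↦ a ∈ f k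

theorem card_biUnion_sdiff_add_two_mul_card (htwo : ∀ a ∈ t, #{k ∈ s | a ∈ f k} = 2)
    (hone : ∀ a ∈ s.biUnion f \ t, #{k ∈ s | a ∈ f k} = 1) :
    #(s.biUnion f \ t) + 2 * #t = ∑ k ∈ s, #(f k) := by
  have hcover : s.biUnion f ⊆ s.biUnion f \ t ∪ t := by
    rw [sdiff_union_self_eq_union]
    exact subset_union_left
  rw [sum_card_eq_sum_card_filter_mem hcover, sum_union sdiff_disjoint, sum_congr rfl hone,
    sum_congr rfl htwo]
  simp [mul_comm]

end FoldSymmDiff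

theorem image_natCast_range_eq_univ (K : ℕ) [NeZero K] :
    (range K).image (Nat.cast : ℕ → ZMod K) = univ :=
  eq_univ_of_forall fun k ↦ mem_image.2 ⟨k.val, mem_range.2 k.val_lt, ZMod.natCast_zmod_val k⟩

theorem iterSD_eq_fold {Q : Type*} [DecidableEq Q] (K : ℕ) [NeZero K] (g : ZMod K → Finset Q) :
    iterSD K g = univ.fold symmDiff ∅ g := by
  have hinj : Set.InjOn (Nat.cast : ℕ → ZMod K) (range K) := by
    simpa using CharP.natCast_injOn_Iio (ZMod K) K
  rw [← image_natCast_range_eq_univ, fold_image hinj]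
  -- The coercion in `iterSD` is elaborated as a monadic map over the list, not inside the fold.
  change ((List.range K) >>= fun k ↦ pure (k : ZMod K)).foldr _ ∅ = _
  rw [bind_pure_comp, List.map_eq_map, List.foldr_map]
  exact (List.foldr_map ..).symm

/-- The incidence pattern of a stabilizer configuration, with the cyclic successor replaced by an
arbitrary map `next` on the index type: the sets `g k` and `g (next k)` meet exactly in the point
`p k`, these points are pairwise distinct, and all other pairs of sets are disjoint. -/
structure IsStabilizerConfiguration {ι Q : Type*} [DecidableEq Q] (next : ι → ι)
    (g : ι → Finset Q) (p : ι → Q) : Prop where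
  next_ne : ∀ k, next k ≠ k
  injective : Function.Injective p
  inter_next : ∀ k, g k ∩ g (next k) = {p k}
  disjoint : ∀ j k, j ≠ k → k ≠ next j → j ≠ next k → Disjoint (g j) (g k)

namespace IsStabilizerConfiguration

variable {ι Q : Type*} [DecidableEq Q] {g : ι → Finset Q} {p : ι → Q}

theorem of_add [AddGroup ι] {d : ι} (hd : d ≠ 0) (hp : Function.Injective p)
    (hadj : ∀ k, g k ∩ g (k + d) = {p k})
    (hfar : ∀ k k', k' ≠ k - d → k' ≠ k → k' ≠ k + d → g k ∩ g k' = ∅) :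
    IsStabilizerConfiguration (· + d) g p where
  next_ne k := by simpa using hd
  injective := hp
  inter_next := hadj
  disjoint j k hjk hkj hjk' :=
    disjoint_iff_inter_eq_empty.2 <|
      hfar j k (fun h ↦ hjk' (eq_add_of_sub_eq h.symm)) hjk.symm hkj

variable {next : ι → ι} (h : IsStabilizerConfiguration next g p) {j k : ι} {q : Q}
include h

theorem mem_and_mem_next_iff : q ∈ g k ∧ q ∈ g (next k) ↔ q = p k := by
  rw [← mem_inter, h.inter_next, mem_singleton]

theorem eq_or_eq_of_mem_of_mem (hj : q ∈ g j) (hk : q ∈ g k) (hjk : j ≠ k) :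
    q = p j ∨ q = p k := by
  by_cases hkj : k = next j
  · exact .inl (h.mem_and_mem_next_iff.1 ⟨hj, hkj ▸ hk⟩)
  by_cases hjk' : j = next k
  · exact .inr (h.mem_and_mem_next_iff.1 ⟨hk, hjk' ▸ hj⟩)
  exact absurd hk (disjoint_left.1 (h.disjoint j k hjk hkj hjk') hj)

theorem point_mem_iff : p k ∈ g j ↔ j = k ∨ j = next k := by
  obtain ⟨hk, hnext⟩ := h.mem_and_mem_next_iff.2 (rfl : p k = p k)
  refine ⟨fun hj ↦ or_iff_not_imp_right.2 fun hne ↦ ?_, ?_⟩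
  · rcases h.eq_or_eq_of_mem_of_mem hj hnext hne with heq | heq
    · exact (h.injective heq).symm
    · exact absurd (h.injective heq).symm (h.next_ne k)
  · rintro (rfl | rfl)
    exacts [hk, hnext]

variable [Fintype ι]

theorem card_filter_point_mem (k : ι) : #{j | p k ∈ g j} = 2 := by
  classical
  have hpair : ({j | p k ∈ g j} : Finset ι) = {k, next k} := by
    ext j
    simp [h.point_mem_iff]
  rw [hpair, card_pair (h.next_ne k).symm]

theorem card_filter_mem_eq_one (hq : q ∈ univ.biUnion g \ univ.image p) :
    #{j | q ∈ g j} = 1 := by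
  simp only [mem_sdiff, mem_biUnion, mem_image, mem_univ, true_and, not_exists] at hq
  obtain ⟨⟨k, hk⟩, hp⟩ := hq
  refine card_eq_one.2 ⟨k, eq_singleton_iff_unique_mem.2 ⟨by simpa using hk, fun j hj ↦ ?_⟩⟩
  by_contra hjk
  rcases h.eq_or_eq_of_mem_of_mem (mem_filter.1 hj).2 hk hjk with heq | heq
  exacts [hp j heq.symm, hp k heq.symm]

end IsStabilizerConfiguration

theorem stmt15_general {ι Q : Type*} [Fintype ι] [DecidableEq Q] {next : ι → ι}
    {g : ι → Finset Q} {p : ι → Q} (h : IsStabilizerConfiguration next g p) :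
    univ.fold symmDiff ∅ g = univ.biUnion g \ univ.image p ∧
      #(univ.fold symmDiff ∅ g) + 2 * Fintype.card ι = ∑ k, #(g k) := by
  have htwo : ∀ q ∈ univ.image p, #{j | q ∈ g j} = 2 :=
    forall_mem_image.2 fun k _ ↦ h.card_filter_point_mem k
  have hone : ∀ q ∈ univ.biUnion g \ univ.image p, #{j | q ∈ g j} = 1 :=
    fun _ ↦ h.card_filter_mem_eq_one
  have hfold : univ.fold symmDiff ∅ g = univ.biUnion g \ univ.image p :=
    fold_symmDiff_eq_biUnion_sdiff (fun q hq ↦ htwo q hq ▸ even_two)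
      fun q hq ↦ hone q hq ▸ odd_one
  refine ⟨hfold, ?_⟩
  rw [hfold, ← card_biUnion_sdiff_add_two_mul_card htwo hone,
    card_image_of_injective _ h.injective, card_univ]

/-- For a cyclic stabilizer configuration, the iterated symmetric difference equals
the union of the `g k` minus the intersection points, and its cardinality is
`∑ |g k| − 2K`. -/
theorem stmt15 {Q : Type*} [DecidableEq Q] (K : ℕ) [NeZero K] (hK : 3 ≤ K)
    (g : ZMod K → Finset Q) (idx : ZMod K → Q)
    (hidx : Function.Injective idx)
    (hadj : ∀ k, g k ∩ g (k + 1) = {idx k})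
    (hfar : ∀ k k' : ZMod K, k' ≠ k - 1 → k' ≠ k → k' ≠ k + 1 → g k ∩ g k' = ∅) :
    iterSD K g = (Finset.univ.biUnion g) \ (Finset.univ.image idx) ∧
      (iterSD K g).card = (∑ k, (g k).card) - 2 * K := by
  have : Fact (1 < K) := ⟨by lia⟩
  obtain ⟨hfold, hcard⟩ := stmt15_general (.of_add one_ne_zero hidx hadj hfar)
  rw [ZMod.card] at hcard
  exact iterSD_eq_fold K g ▸ ⟨hfold, Nat.eq_sub_of_add_eq hcard⟩
end

section
/- Let G be a simple graph on a nonempty finite vertex set of cardinality n in which every vertex has degree at least 3, and let r ≥ 1 be a natural number. If every cycle in G has length at least 2r + 1 (i.e. the girth of G is at least 2r + 1), then n ≥ 3·2^r − 2. In particular, the girth of a finite graph of minimum degree at least 3 is O(log n). -/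
/-!
Fix a vertex `c`. A vertex `v` at distance `k` from `c` has at most one neighbour at distance at
most `k`: two of them would extend to two distinct paths from `v` to `c` of length at most `k + 1`,
hence would produce a cycle of length at most `2 * (k + 1)`. So all but one of the neighbours of `v`
lie at distance `k + 1`, and by the same argument none of these is shared with another vertex at
distance `k`. If all degrees are at least `d + 1`, then up to half the girth each sphere around `c`
is at least `d` times as large as the previous one, and at least `d + 1` times for the first sphere;
summing over the spheres gives the bound.
-/

namespace MooreBound

theorem mul_encard_le_of_pairwiseDisjoint {α β : Type*} {s : Set α} {t : Set β} {f : α → Set β}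
    {n : ℕ} (hdisj : s.PairwiseDisjoint f) (hsub : ∀ a ∈ s, f a ⊆ t)
    (hcard : ∀ a ∈ s, n ≤ (f a).encard) : n * s.encard ≤ t.encard := by
  have hemb (a : s) : Nonempty (Fin n ↪ f a) := by
    rw [← Cardinal.lift_mk_le', Cardinal.mk_fin, Cardinal.lift_natCast, Cardinal.lift_uzero]
    exact Cardinal.natCast_le_toENat.mp (hcard a a.2)
  let g (a : s) : Fin n ↪ f a := (hemb a).some
  let F (p : Fin n × s) : t := ⟨g p.2 p.1, hsub p.2 p.2.2 (g p.2 p.1).2⟩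
  have hF : Function.Injective F := by
    rintro ⟨i, a⟩ ⟨j, b⟩ hij
    have hval : (g a i : β) = g b j := congrArg Subtype.val hij
    obtain rfl : a = b :=
      Subtype.ext (hdisj.elim_set a.2 b.2 (g a i) (g a i).2 (hval ▸ (g b j).2))
    rw [(g a).injective (Subtype.ext hval)]
  simpa [ENat.card_prod] using ENat.card_le_card_of_injective hF

section

variable {V : Type*} {G : SimpleGraph V} {c u u' v : V} {d k : ℕ}

variable (G c) in
/-- The sphere of radius `k` around `c` for the extended graph distance, complementing Mathlib's
open balls `SimpleGraph.ball`. Vertices not reachable from `c` lie on the sphere of radius `⊤`. -/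
def sphere (k : ℕ∞) : Set V :=
  {v | G.edist v c = k}

theorem mem_sphere {k : ℕ∞} : v ∈ sphere G c k ↔ G.edist v c = k :=
  .rfl

theorem sphere_zero : sphere G c 0 = {c} := by
  ext v
  simp [mem_sphere]

theorem sphere_one : sphere G c 1 = G.neighborSet c := by
  ext v
  simp [mem_sphere, G.adj_comm]

theorem encard_ball_add_one (k : ℕ) :
    (G.ball c (k + 1)).encard = (G.ball c k).encard + (sphere G c k).encard := by
  have hunion : G.ball c (k + 1) = G.ball c k ∪ sphere G c k := by
    ext v
    simp [mem_sphere, ENat.lt_natCast_add_one_iff, le_iff_lt_or_eq]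
  have hdisj : Disjoint (G.ball c k) (sphere G c k) :=
    Set.disjoint_left.mpr fun v hball hsphere ↦ (SimpleGraph.mem_ball.mp hball).ne hsphere
  rw [hunion, Set.encard_union_eq hdisj]

theorem encard_ball_eq_sum_encard_sphere (n : ℕ) :
    (G.ball c n).encard = ∑ k ∈ Finset.range n, (sphere G c k).encard := by
  induction n with
  | zero => simp
  | succ n ih => rw [Nat.cast_succ, encard_ball_add_one, ih, Finset.sum_range_succ]

theorem exists_isPath_snd_eq (hadj : G.Adj v u) (hu : G.edist u c ≤ k) (hv : k ≤ G.edist v c) :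
    ∃ p : G.Walk v c, p.IsPath ∧ p.length ≤ k + 1 ∧ p.snd = u := by
  classical
  have hreach : G.Reachable u c :=
    SimpleGraph.reachable_of_edist_ne_top (hu.trans_lt (ENat.natCast_lt_top k)).ne
  obtain ⟨q, hq, hlen⟩ := hreach.exists_path_of_dist
  have hqk : q.length ≤ k := by
    rwa [hlen, ← Nat.cast_le (α := ℕ∞), hreach.coe_dist_eq_edist]
  have hvq : v ∉ q.support := fun hmem ↦ by
    have hlt : (q.dropUntil v hmem).length < q.length :=
      q.length_dropUntil_lt_length hmem hadj.ne
    have hle : k ≤ (q.dropUntil v hmem).length :=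
      Nat.cast_le.mp (hv.trans (SimpleGraph.edist_le _))
    omega
  exact ⟨q.cons hadj, hq.cons hvq, by simpa using hqk, by simp⟩

theorem eq_of_adj_of_edist_le (hgirth : ((2 * (k + 1) : ℕ) : ℕ∞) < G.egirth)
    (hv : k ≤ G.edist v c) (hadj : G.Adj v u) (hadj' : G.Adj v u')
    (hu : G.edist u c ≤ k) (hu' : G.edist u' c ≤ k) : u = u' := by
  obtain ⟨p, hp, hlen, rfl⟩ := exists_isPath_snd_eq hadj hu hv
  obtain ⟨q, hq, hlen', rfl⟩ := exists_isPath_snd_eq hadj' hu' hv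
  by_contra hne
  obtain ⟨_, _, _, C, hC, hClen⟩ :=
    hp.exists_isCycle_length_le_add_of_ne hq fun hpq ↦ hne (congrArg _ hpq)
  have hlong : 2 * (k + 1) < C.length :=
    Nat.cast_lt.mp (hgirth.trans_le (SimpleGraph.egirth_le_length hC))
  omega

theorem neighborSet_sdiff_ball_subset_sphere {k : ℕ∞} (hv : v ∈ sphere G c k) :
    G.neighborSet v \ G.ball c (k + 1) ⊆ sphere G c (k + 1) := by
  rintro u ⟨hadj, hfar⟩
  refine le_antisymm ?_ (not_lt.mp hfar)
  calc G.edist u c ≤ G.edist u v + G.edist v c := G.edist_triangle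
    _ = k + 1 := by rw [SimpleGraph.edist_eq_one_iff_adj.mpr hadj.symm, mem_sphere.mp hv, add_comm]

theorem le_encard_neighborSet_sdiff_ball (hdeg : d + 1 ≤ (G.neighborSet v).encard)
    (hgirth : ((2 * (k + 1) : ℕ) : ℕ∞) < G.egirth) (hv : v ∈ sphere G c k) :
    d ≤ (G.neighborSet v \ G.ball c (k + 1)).encard := by
  have hparent : (G.neighborSet v ∩ G.ball c (k + 1)).encard ≤ 1 :=
    Set.encard_le_one_iff.mpr fun u u' hu hu' ↦
      eq_of_adj_of_edist_le hgirth (mem_sphere.mp hv).ge hu.1 hu'.1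
        (ENat.lt_natCast_add_one_iff.mp hu.2) (ENat.lt_natCast_add_one_iff.mp hu'.2)
  refine (ENat.add_le_add_iff_right ENat.one_ne_top).mp ?_
  calc (d : ℕ∞) + 1 ≤ (G.neighborSet v).encard := hdeg
    _ = (G.neighborSet v \ G.ball c (k + 1)).encard + (G.neighborSet v ∩ G.ball c (k + 1)).encard :=
      (Set.encard_sdiff_add_encard_inter _ _).symm
    _ ≤ _ := by gcongr

theorem pairwiseDisjoint_neighborSet_sdiff_ball (hgirth : ((2 * (k + 1) : ℕ) : ℕ∞) < G.egirth) :
    (sphere G c k).PairwiseDisjoint fun v ↦ G.neighborSet v \ G.ball c (k + 1) := by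
  intro v hv v' hv' hne
  refine Set.disjoint_left.mpr fun u hu hu' ↦ hne ?_
  have hfar : k ≤ G.edist u c := le_self_add.trans (not_lt.mp hu.2)
  exact eq_of_adj_of_edist_le hgirth hfar hu.1.symm hu'.1.symm
    (mem_sphere.mp hv).le (mem_sphere.mp hv').le

theorem mul_encard_sphere_le (hdeg : ∀ v, d + 1 ≤ (G.neighborSet v).encard)
    (hgirth : ((2 * (k + 1) : ℕ) : ℕ∞) < G.egirth) :
    d * (sphere G c k).encard ≤ (sphere G c (k + 1)).encard :=
  mul_encard_le_of_pairwiseDisjoint (pairwiseDisjoint_neighborSet_sdiff_ball hgirth)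
    (fun _ ↦ neighborSet_sdiff_ball_subset_sphere)
    (fun v ↦ le_encard_neighborSet_sdiff_ball (hdeg v) hgirth)

theorem le_encard_sphere (hdeg : ∀ v, d + 1 ≤ (G.neighborSet v).encard)
    (hgirth : ((2 * (k + 1) : ℕ) : ℕ∞) < G.egirth) :
    (((d + 1) * d ^ k : ℕ) : ℕ∞) ≤ (sphere G c (k + 1)).encard := by
  induction k with
  | zero => simpa [sphere_one] using hdeg c
  | succ k ih =>
    have hgirth' : ((2 * (k + 1) : ℕ) : ℕ∞) < G.egirth :=
      lt_of_le_of_lt (Nat.cast_le.mpr (by omega)) hgirth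
    calc (((d + 1) * d ^ (k + 1) : ℕ) : ℕ∞) = d * ((d + 1) * d ^ k : ℕ) := by push_cast; ring
      _ ≤ d * (sphere G c (k + 1)).encard := by gcongr; exact ih hgirth'
      _ ≤ (sphere G c ((k + 1 : ℕ) + 1)).encard := mul_encard_sphere_le hdeg hgirth

end

end MooreBound

-- Mathlib's balls are open, so `G.ball c (r + 1)` is the set of vertices at distance at most `r`.
theorem stmt17_general {V : Type*} (G : SimpleGraph V) (d r : ℕ)
    (hdeg : ∀ v, d + 1 ≤ (G.neighborSet v).encard)
    (hgirth : ((2 * r + 1 : ℕ) : ℕ∞) ≤ G.egirth) (c : V) :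
    ((1 + (d + 1) * ∑ i ∈ Finset.range r, d ^ i : ℕ) : ℕ∞) ≤ (G.ball c (r + 1)).encard := by
  have hsphere (i : ℕ) (hi : i ∈ Finset.range r) :
      (((d + 1) * d ^ i : ℕ) : ℕ∞) ≤ (MooreBound.sphere G c (i + 1)).encard := by
    refine MooreBound.le_encard_sphere hdeg (lt_of_lt_of_le (Nat.cast_lt.mpr ?_) hgirth)
    have hir : i < r := Finset.mem_range.mp hi
    omega
  calc ((1 + (d + 1) * ∑ i ∈ Finset.range r, d ^ i : ℕ) : ℕ∞)
      = 1 + ∑ i ∈ Finset.range r, (((d + 1) * d ^ i : ℕ) : ℕ∞) := by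
        rw [Finset.mul_sum]; push_cast; rfl
    _ ≤ 1 + ∑ i ∈ Finset.range r, (MooreBound.sphere G c (i + 1)).encard := by
        gcongr with i hi; exact hsphere i hi
    _ = ∑ i ∈ Finset.range (r + 1), (MooreBound.sphere G c i).encard := by
        simp [Finset.sum_range_succ', MooreBound.sphere_zero, add_comm]
    _ = (G.ball c (r + 1)).encard := by
        rw [← MooreBound.encard_ball_eq_sum_encard_sphere, Nat.cast_succ]

theorem MooreBound.one_add_mul_geomSum_le_card {V : Type*} [Fintype V] [Nonempty V]
    {G : SimpleGraph V} [DecidableRel G.Adj] {d r : ℕ} (hdeg : ∀ v, d + 1 ≤ G.degree v)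
    (hgirth : ((2 * r + 1 : ℕ) : ℕ∞) ≤ G.egirth) :
    1 + (d + 1) * ∑ i ∈ Finset.range r, d ^ i ≤ Fintype.card V := by
  have hencard (v : V) : d + 1 ≤ (G.neighborSet v).encard := by
    rw [← G.coe_neighborFinset, Set.encard_coe_eq_coe_finsetCard]
    exact_mod_cast hdeg v
  have hball := stmt17_general G d r hencard hgirth (Classical.arbitrary V)
  simpa only [ENat.card_eq_coe_fintype_card, Nat.cast_le] using hball.trans Set.encard_le_card

/-- Moore bound: a finite nonempty graph with minimum degree at least 3 and girth at
least `2r + 1` has at least `3·2^r − 2` vertices. -/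
theorem stmt17 {V : Type*} [Fintype V] [Nonempty V] (G : SimpleGraph V)
    [DecidableRel G.Adj] (hdeg : ∀ v : V, 3 ≤ G.degree v)
    (r : ℕ) (hr : 1 ≤ r) (hgirth : ((2 * r + 1 : ℕ) : ℕ∞) ≤ G.girth) :
    3 * 2 ^ r - 2 ≤ Fintype.card V := by
  have h := MooreBound.one_add_mul_geomSum_le_card hdeg
    (hgirth.trans (ENat.natCast_toNat_le_self _))
  rw [Nat.geomSum_eq le_rfl] at h
  omega
end
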